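/- arXiv:2307.08497 — 3 statements merged into one kernel-verified Lean document; each statement's English description precedes it below -/
import Mathlib

section
/- Let G be a graph, S a set of vertices of G, C a connected component of G − S, and {M₀, M₁} a bipartition of S. For a cycle O in G, let W(O) be the number of M₀–M₁ paths contained in O that meet C. Suppose Q is an O₁-path for a cycle O₁ in G (a path with both endvertices on O₁ and otherwise disjoint from O₁), and let O₂ and O₃ be the two cycles in O₁ ∪ Q that contain Q. Then W(O₁) + W(O₂) + W(O₃) is even. -/
open SimpleGraph

namespace RadialPaper

variable {V W N : Type*}

/-- The ball of radius `r` around a set `U` of vertices of `G`. -/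
def ballSet (G : SimpleGraph V) (U : Set V) (r : ℕ) : Set V :=
  {v | ∃ u ∈ U, G.edist u v ≤ (r : ℕ∞)}

/-- `G` has radius at most `r`: some vertex has distance at most `r` from every vertex.
The empty graph has radius `0`; a nonempty disconnected graph has radius `∞`, hence
satisfies `radiusLE` for no `r`. -/
def radiusLE (G : SimpleGraph V) (r : ℕ) : Prop :=
  Nonempty V → ∃ v : V, ∀ w : V, G.edist v w ≤ (r : ℕ∞)

/-- `(Hg, B)` is a graph-decomposition of `G` modelled on `Hg`. -/
def IsGraphDecomp (G : SimpleGraph V) (Hg : SimpleGraph N) (B : N → Set V) : Prop :=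
  (∀ v : V, ∃ h : N, v ∈ B h) ∧
  (∀ ⦃u v : V⦄, G.Adj u v → ∃ h : N, u ∈ B h ∧ v ∈ B h) ∧
  (∀ v : V, (Hg.induce {h : N | v ∈ B h}).Connected)

/-- A subgraph `X` of `G` is `c`-quasi-geodesic. -/
def IsQuasiGeodesic (G : SimpleGraph V) (X : G.Subgraph) (c : ℕ) : Prop :=
  ∀ u v : X.verts, X.coe.edist u v ≤ (c : ℕ∞) * G.edist (u : V) (v : V)

/-- The subgraph `Y` of `G` is a `(≥ k)`-subdivision of the graph `X`. -/
def IsSubdivGE (k : ℕ) (X : SimpleGraph W) {G : SimpleGraph V} (Y : G.Subgraph) : Prop :=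
  ∃ (f : W → V) (p : ∀ ⦃u v : W⦄, X.Adj u v → G.Walk (f u) (f v)),
    Function.Injective f ∧
    (∀ ⦃u v : W⦄ (h : X.Adj u v), (p h).IsPath) ∧
    (∀ ⦃u v : W⦄ (h : X.Adj u v), k + 1 ≤ (p h).length) ∧
    (∀ ⦃u v : W⦄ (h : X.Adj u v), p h.symm = (p h).reverse) ∧
    (∀ ⦃u v : W⦄ (h : X.Adj u v) (w : W), f w ∈ (p h).support → w = u ∨ w = v) ∧
    (∀ ⦃u v u' v' : W⦄ (h : X.Adj u v) (h' : X.Adj u' v'), s(u, v) ≠ s(u', v') →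
      ∀ x : V, x ∈ (p h).support → x ∈ (p h').support →
        (x = f u ∨ x = f v) ∧ (x = f u' ∨ x = f v')) ∧
    Y.verts = Set.range f ∪ {x : V | ∃ (u v : W) (h : X.Adj u v), x ∈ (p h).support} ∧
    Y.edgeSet = {e : Sym2 V | ∃ (u v : W) (h : X.Adj u v), e ∈ (p h).edges}

/-- `G` contains a `(≥ k)`-subdivision of `X` as a `c`-quasi-geodesic subgraph. -/
def ContainsQuasiGeodesicSubdivGE (G : SimpleGraph V) (k : ℕ) (X : SimpleGraph W) (c : ℕ) :
    Prop :=
  ∃ Y : G.Subgraph, IsSubdivGE k X Y ∧ IsQuasiGeodesic G Y c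

/-- `X` is a minor of `Hg`. -/
def IsMinorOf (X : SimpleGraph W) (Hg : SimpleGraph N) : Prop :=
  ∃ B : W → Set N, (∀ w, (B w).Nonempty) ∧ (∀ w, (Hg.induce (B w)).Connected) ∧
    (∀ ⦃w w' : W⦄, w ≠ w' → Disjoint (B w) (B w')) ∧
    (∀ ⦃w w' : W⦄, X.Adj w w' → ∃ a ∈ B w, ∃ b ∈ B w', Hg.Adj a b)

/-- A class of (finite) graphs, given on the canonical vertex sets `Fin n`, is minor-closed. -/
def MinorClosed (ℋ : ∀ n : ℕ, SimpleGraph (Fin n) → Prop) : Prop :=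
  ∀ ⦃m n : ℕ⦄ (X : SimpleGraph (Fin m)) (Hg : SimpleGraph (Fin n)),
    ℋ n Hg → IsMinorOf X Hg → ℋ m X

/-- The triangle `K³`. -/
def triangleGraph : SimpleGraph (Fin 3) := ⊤

/-- The claw `K_{1,3}`, with centre `0`. -/
def clawGraph : SimpleGraph (Fin 4) := SimpleGraph.fromRel (fun a _ => a = 0)

/-- The wrench graph: two adjacent vertices `0, 1` of degree three, with leaves `2,3` and
`4,5` respectively. -/
def wrenchGraph : SimpleGraph (Fin 6) :=
  SimpleGraph.fromRel (fun a b =>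
    (a = 0 ∧ b = 1) ∨ (a = 0 ∧ b = 2) ∨ (a = 0 ∧ b = 3) ∨ (a = 1 ∧ b = 4) ∨ (a = 1 ∧ b = 5))

/-- The star `K_{1,m}`, with centre `none`. -/
def starGraph (m : ℕ) : SimpleGraph (Option (Fin m)) :=
  SimpleGraph.fromRel (fun a _ => a = none)

/-- `Hg` is a disjoint union of paths: every connected component is a path. -/
def IsUnionOfPaths (Hg : SimpleGraph N) : Prop :=
  ∀ cc : Hg.ConnectedComponent, ∃ m : ℕ,
    Nonempty (Hg.induce cc.supp ≃g SimpleGraph.pathGraph m)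

/-- `Hg` is a disjoint union of cycles: every connected component is a cycle. -/
def IsUnionOfCycles (Hg : SimpleGraph N) : Prop :=
  ∀ cc : Hg.ConnectedComponent, ∃ m : ℕ, 3 ≤ m ∧
    Nonempty (Hg.induce cc.supp ≃g SimpleGraph.cycleGraph m)

/-- `Hg` is a subdivided star, i.e. a `(≥ 0)`-subdivision of some star `K_{1,m}`. -/
def IsSubdividedStar (Hg : SimpleGraph N) : Prop :=
  ∃ m : ℕ, IsSubdivGE 0 (starGraph m) (⊤ : Hg.Subgraph)

/-- `Hg` is a disjoint union of subdivided stars. -/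
def IsUnionOfSubdividedStars (Hg : SimpleGraph N) : Prop :=
  ∀ cc : Hg.ConnectedComponent, IsSubdividedStar (Hg.induce cc.supp)

/-- A graph-decomposition is honest: bags of adjacent nodes intersect. -/
def Honest (Hg : SimpleGraph N) (B : N → Set V) : Prop :=
  ∀ ⦃h h' : N⦄, Hg.Adj h h' → (B h ∩ B h').Nonempty

/-- The outer-radial width of a decomposition of `G` is at most `r`. -/
def OuterRadialWidthLE (G : SimpleGraph V) (B : N → Set V) (r : ℕ) : Prop :=
  ∀ h : N, ∃ z : V, ∀ v ∈ B h, G.edist z v ≤ (r : ℕ∞)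

/-- The radial spread of a decomposition `(Hg, B)` of a graph with vertex set `V`
is at most `r`. -/
def RadialSpreadLE (Hg : SimpleGraph N) (B : N → Set V) (r : ℕ) : Prop :=
  ∀ v : V, radiusLE (Hg.induce {h : N | v ∈ B h}) r

/-- `φ` is an `(m, a, M, A, r)`-quasi-isometry from `Hg` to `G`. -/
def IsQuasiIsometry (Hg : SimpleGraph N) (G : SimpleGraph V) (m a M A r : ℕ)
    (φ : N → V) : Prop :=
  (∀ h h' : N, Hg.edist h h' ≤ (m : ℕ∞) * G.edist (φ h) (φ h') + (a : ℕ∞)) ∧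
  (∀ h h' : N, G.edist (φ h) (φ h') ≤ (M : ℕ∞) * Hg.edist h h' + (A : ℕ∞)) ∧
  (∀ v : V, ∃ h : N, G.edist v (φ h) ≤ (r : ℕ∞))

/-- `C` is a connected component of `G - S`: a maximal connected set of vertices
disjoint from `S`. -/
def IsCompOf (G : SimpleGraph V) (C S : Set V) : Prop :=
  C.Nonempty ∧ Disjoint C S ∧ (G.induce C).Connected ∧
  ∀ D : Set V, C ⊆ D → Disjoint D S → (G.induce D).Connected → D = C

/-- The subgraph `P` of `G` is an `M₀`–`M₁` path meeting `C`. -/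
def IsM01Path (G : SimpleGraph V) (M₀ M₁ C : Set V) (P : G.Subgraph) : Prop :=
  ∃ (x y : V) (q : G.Walk x y), q.IsPath ∧ q.toSubgraph = P ∧ x ∈ M₀ ∧ y ∈ M₁ ∧
    (∀ z ∈ q.support, z ≠ x → z ≠ y → z ∉ M₀ ∪ M₁) ∧ ∃ z ∈ q.support, z ∈ C

/-- The number of `M₀`–`M₁` paths meeting `C` that are contained in the subgraph `OS`. -/
noncomputable def Wcount (G : SimpleGraph V) (M₀ M₁ C : Set V) (OS : G.Subgraph) : ℕ :=
  Set.ncard {P : G.Subgraph | P ≤ OS ∧ IsM01Path G M₀ M₁ C P}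



/-- cons-form of an `S`-`S` segment through `C` in `O` -/
def SegW (G : SimpleGraph V) (S C : Set V) (O : G.Subgraph) {a c b : V} (h : G.Adj a c)
    (p : G.Walk c b) : Prop :=
  a ∈ S ∧ b ∈ S ∧ p.IsPath ∧ s(a, c) ∉ p.edges ∧ (∀ v ∈ p.support, v ≠ b → v ∈ C) ∧ c ≠ b ∧
    (Walk.cons h p).toSubgraph ≤ O

def SegP (G : SimpleGraph V) (S C : Set V) (O P : G.Subgraph) : Prop :=
  ∃ (a c b : V) (h : G.Adj a c) (p : G.Walk c b), SegW G S C O h p ∧ (Walk.cons h p).toSubgraph = P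

theorem comp_closed {G : SimpleGraph V} {S C : Set V} (hC : IsCompOf G C S) {u v : V}
    (hu : u ∈ C) (hv : v ∉ S) (h : G.Adj u v) : v ∈ C := by
  obtain ⟨h1, h2, h3, h4⟩ := hC
  have := h4 (C ∪ {u, v}) Set.subset_union_left (by
    rw [Set.disjoint_union_left]
    refine ⟨h2, Set.disjoint_left.2 ?_⟩
    rintro z (rfl | rfl)
    · exact Set.disjoint_left.1 h2 hu
    · exact hv)
    (SimpleGraph.induce_union_connected h3.preconnected
      (SimpleGraph.induce_pair_connected_of_adj h).preconnected ⟨u, hu, by simp⟩)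
  rw [← this]; simp

theorem seg_dich {G : SimpleGraph V} {S C : Set V} (hC : IsCompOf G C S) {c b : V}
    (p : G.Walk c b) (hp : p.IsPath) (hS : ∀ v ∈ p.support, v ≠ b → v ∉ S) :
    (∀ v ∈ p.support, v ≠ b → v ∈ C) ∨ (∀ v ∈ p.support, v ≠ b → v ∉ C) := by
  induction p with
  | nil => left; simp
  | @cons c d b h p ih =>
    rw [Walk.cons_isPath_iff] at hp
    have ih := ih hp.1 (fun v hv => hS v (by simp [hv]))
    by_cases hdb : d = b
    · subst hdb
      obtain rfl : p = Walk.nil := by simpa using hp.1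
      by_cases hc : c ∈ C
      · left; simp; tauto
      · right; simp; tauto
    · have hd : d ∉ S := hS d (by simp) hdb
      have hcb : c ≠ b := by rintro rfl; exact hp.2 p.end_mem_support
      have hc : c ∉ S := hS c (by simp) hcb
      rcases ih with ih | ih
      · left
        intro v hv hvb
        rw [Walk.support_cons, List.mem_cons] at hv
        rcases hv with rfl | hv
        · exact comp_closed hC (ih d (by simp) hdb) hc h.symm
        · exact ih v hv hvb
      · right
        intro v hv hvb
        rw [Walk.support_cons, List.mem_cons] at hv
        rcases hv with rfl | hv
        · exact fun hh => ih d (by simp) hdb (comp_closed hC hh hd h)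
        · exact ih v hv hvb

theorem seg_trunc {G : SimpleGraph V} {S C : Set V} (hC : IsCompOf G C S) {k m : V}
    (p : G.Walk k m) (hp : p.IsPath) (hk : k ∈ C) (hm : m ∈ S) :
    ∃ (b : V) (q : G.Walk k b), b ∈ S ∧ q.IsPath ∧ (∀ v ∈ q.support, v ≠ b → v ∈ C) ∧
      q.support ⊆ p.support ∧ q.edges ⊆ p.edges ∧ q.toSubgraph ≤ p.toSubgraph := by
  induction p with
  | nil => exact absurd hm (Set.disjoint_left.1 hC.2.1 hk)
  | @cons k d m h p ih =>
    rw [Walk.cons_isPath_iff] at hp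
    by_cases hd : d ∈ S
    · refine ⟨d, Walk.cons h Walk.nil, hd, ?_, ?_, ?_, ?_, ?_⟩
      · simp [h.ne]
      · simp; tauto
      · simp
      · simp
      · simp only [Walk.toSubgraph]
        exact sup_le_sup_left (by simp) _
    · obtain ⟨b, q, h1, h2, h3, h4, h5, h6⟩ := ih hp.1 (comp_closed hC hk hd h) hm
      refine ⟨b, Walk.cons h q, h1, ?_, ?_, ?_, ?_, ?_⟩
      · rw [Walk.cons_isPath_iff]; exact ⟨h2, fun hh => hp.2 (h4 hh)⟩
      · intro v hv hvb
        rw [Walk.support_cons, List.mem_cons] at hv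
        rcases hv with rfl | hv
        · exact hk
        · exact h3 v hv hvb
      · simp only [Walk.support_cons]; exact List.cons_subset_cons _ h4
      · simp only [Walk.edges_cons]; exact List.cons_subset_cons _ h5
      · exact sup_le_sup_left h6 _

theorem seg_unique {G : SimpleGraph V} {S : Set V} {O : G.Subgraph}
    (hO : ∀ v x y z, O.Adj v x → O.Adj v y → O.Adj v z → y ≠ x → z ≠ x → y = z)
    {c b : V} (p : G.Walk c b) : ∀ (a b' : V) (p' : G.Walk c b'),
    O.Adj a c → p.IsPath → p'.IsPath → s(a, c) ∉ p.edges → s(a, c) ∉ p'.edges →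
    (∀ v ∈ p.support, v ≠ b → v ∉ S) → (∀ v ∈ p'.support, v ≠ b' → v ∉ S) → b ∈ S → b' ∈ S →
    p.toSubgraph ≤ O → p'.toSubgraph ≤ O → p.toSubgraph = p'.toSubgraph := by
  induction p with
  | nil =>
    intro a b' p' ha hp hp' hae hae' hs hs' hb hb' hle hle'
    cases p' with
    | nil => rfl
    | cons h p' =>
      rw [Walk.cons_isPath_iff] at hp'
      refine absurd hb (hs' _ (by simp) ?_)
      rintro rfl; exact hp'.2 p'.end_mem_support
  | @cons c d b h p ih =>
    intro a b' p' ha hp hp' hae hae' hs hs' hb hb' hle hle'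
    rw [Walk.cons_isPath_iff] at hp
    cases p' with
    | nil =>
      refine absurd hb' (hs _ (by simp) ?_)
      rintro rfl; exact hp.2 p.end_mem_support
    | @cons _ d' _ h' p' =>
      rw [Walk.cons_isPath_iff] at hp'
      simp only [Walk.toSubgraph, sup_le_iff, subgraphOfAdj_le_iff] at hle hle'
      have hd : d = d' := by
        refine hO c a d d' ha.symm hle.1 hle'.1 ?_ ?_
        · rintro rfl; apply hae; simp [Sym2.eq_swap]
        · rintro rfl; apply hae'; simp [Sym2.eq_swap]
      subst hd
      have := ih c b' p' hle.1 hp.1 hp'.1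
        (fun hh => hp.2 (Walk.fst_mem_support_of_mem_edges _ hh))
        (fun hh => hp'.2 (Walk.fst_mem_support_of_mem_edges _ hh))
        (fun v hv => hs v (by simp [hv])) (fun v hv => hs' v (by simp [hv])) hb hb' hle.2 hle'.2
      simp only [Walk.toSubgraph, this]

theorem SegW.reverse {G : SimpleGraph V} {S C : Set V} (hC : IsCompOf G C S) {O : G.Subgraph}
    {a c b : V} {h : G.Adj a c} {p : G.Walk c b} (hs : SegW G S C O h p) :
    ∃ (d : V) (h' : G.Adj b d) (p' : G.Walk d a), SegW G S C O h' p' ∧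
      (Walk.cons h' p').toSubgraph = (Walk.cons h p).toSubgraph ∧
      (∀ k, s(b, k) ∈ p.edges → k = d) := by
  obtain ⟨h1, h2, h3, h4, h5, h6, h7⟩ := hs
  have hdis := Set.disjoint_left.1 hC.2.1
  rcases hr : p.reverse with _ | ⟨h', p1⟩
  · exact absurd rfl h6
  · rename_i d
    have hrev : (Walk.cons h p).reverse = Walk.cons h' (p1.concat h.symm) := by
      rw [Walk.reverse_cons, hr, Walk.concat_eq_append]; rfl
    have hsub : (Walk.cons h' (p1.concat h.symm)).toSubgraph = (Walk.cons h p).toSubgraph := by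
      rw [← hrev, Walk.toSubgraph_reverse]
    have hpr : (Walk.cons h' p1).IsPath := by rw [← hr]; exact h3.reverse
    rw [Walk.cons_isPath_iff] at hpr
    have hp1 : ∀ v ∈ p1.support, v ∈ C := by
      intro v hv
      refine h5 v ?_ ?_
      · rw [← List.mem_reverse, ← Walk.support_reverse, hr]; simp [hv]
      · rintro rfl; exact hpr.2 hv
    refine ⟨d, h', p1.concat h.symm, ⟨h2, h1, ?_, ?_, ?_, ?_, ?_⟩, hsub, ?_⟩
    · exact hpr.1.concat (fun hh => hdis (hp1 _ hh) h1) _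
    · have ht : (Walk.cons h p).IsTrail := by
        rw [Walk.isTrail_cons]; exact ⟨h3.isTrail, h4⟩
      have := ht.reverse
      rw [hrev, Walk.isTrail_cons] at this
      exact this.2
    · intro v hv hva
      rw [Walk.support_concat] at hv
      simp only [List.mem_append, List.mem_singleton] at hv
      exact hp1 v (hv.resolve_right hva)
    · rintro rfl; exact hdis (hp1 _ p1.start_mem_support) h1
    · rw [hsub]; exact h7
    · intro k hk
      rw [← List.mem_reverse, ← Walk.edges_reverse, hr, Walk.edges_cons, List.mem_cons] at hk
      rcases hk with hk | hk
      · rw [Sym2.eq_iff] at hk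
        rcases hk with hk | hk
        · exact hk.2
        · exact hk.2.trans hk.1
      · exact absurd (Walk.fst_mem_support_of_mem_edges _ hk) hpr.2

/-- edges between `M₀` and `C` -/
def FE (M₀ C : Set V) : Set (Sym2 V) := {e | ∃ m ∈ M₀, ∃ k ∈ C, e = s(m, k)}

theorem mem_FE_of_right {M₀ C : Set V} (hd : Disjoint C M₀) {c d : V} (hc : c ∈ C) :
    s(c, d) ∈ FE M₀ C ↔ d ∈ M₀ := by
  have hd := Set.disjoint_left.1 hd
  constructor
  · rintro ⟨m, hm, k, hk, he⟩
    rw [Sym2.eq_iff] at he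
    rcases he with ⟨rfl, rfl⟩ | ⟨rfl, rfl⟩
    · exact absurd hm (hd hc)
    · exact hm
  · intro h
    exact ⟨d, h, c, hc, Sym2.eq_swap⟩

open Classical in
theorem count_path {G : SimpleGraph V} {M₀ C : Set V} (hd : Disjoint C M₀) {c b : V}
    (p : G.Walk c b) (hp : p.IsPath) (hin : ∀ v ∈ p.support, v ≠ b → v ∈ C) (hcb : c ≠ b) :
    p.edges.countP (fun e => decide (e ∈ FE M₀ C)) = if b ∈ M₀ then 1 else 0 := by
  induction p with
  | nil => exact absurd rfl hcb
  | @cons c d b h p ih =>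
    rw [Walk.cons_isPath_iff] at hp
    have hc : c ∈ C := hin c (by simp) hcb
    rw [Walk.edges_cons, List.countP_cons]
    by_cases hdb : d = b
    · subst hdb
      obtain rfl : p = Walk.nil := by simpa using hp.1
      simp [mem_FE_of_right hd hc]
    · rw [ih hp.1 (fun v hv => hin v (by simp [hv])) hdb]
      have hdC : d ∈ C := hin d (by simp) hdb
      simp [mem_FE_of_right hd hc, Set.disjoint_left.1 hd hdC]

open Classical in
theorem count_seg [Fintype V] {G : SimpleGraph V} {S M₀ C : Set V} (hC : IsCompOf G C S)
    (hM : M₀ ⊆ S) {O : G.Subgraph} {a c b : V} {h : G.Adj a c} {p : G.Walk c b}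
    (hs : SegW G S C O h p) :
    (Finset.univ.filter (fun e => e ∈ (Walk.cons h p).toSubgraph.edgeSet ∧ e ∈ FE M₀ C)).card =
      (if a ∈ M₀ then 1 else 0) + (if b ∈ M₀ then 1 else 0) := by
  obtain ⟨h1, h2, h3, h4, h5, h6, h7⟩ := hs
  have hd : Disjoint C M₀ := hC.2.1.mono_right hM
  have ht : (Walk.cons h p).IsTrail := by
    rw [Walk.isTrail_cons]; exact ⟨h3.isTrail, h4⟩
  have hcount := count_path hd p h3 h5 h6
  have hc : c ∈ C := h5 c (by simp) h6
  have e1 : (Walk.cons h p).edges.countP (fun e => decide (e ∈ FE M₀ C)) =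
      (if a ∈ M₀ then 1 else 0) + (if b ∈ M₀ then 1 else 0) := by
    rw [Walk.edges_cons, List.countP_cons, hcount, Sym2.eq_swap]
    simp [mem_FE_of_right hd hc, add_comm]
  rw [← e1, List.countP_eq_length_filter, ← List.toFinset_card_of_nodup (ht.edges_nodup.filter _)]
  congr 1
  ext e
  rw [Finset.mem_filter, List.mem_toFinset, List.mem_filter, Walk.mem_edges_toSubgraph]
  simp

theorem m01_seg {G : SimpleGraph V} {S M₀ M₁ C : Set V} (hpart : M₀ ∪ M₁ = S)
    (hdisj : Disjoint M₀ M₁) (hC : IsCompOf G C S) {O P : G.Subgraph} (hP : P ≤ O)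
    (hm : IsM01Path G M₀ M₁ C P) :
    ∃ (a c b : V) (h : G.Adj a c) (p : G.Walk c b), SegW G S C O h p ∧
      (Walk.cons h p).toSubgraph = P ∧ a ∈ M₀ ∧ b ∉ M₀ := by
  obtain ⟨x, y, q, hq, hqP, hx, hy, hint, z, hz, hzC⟩ := hm
  have hdis := Set.disjoint_left.1 hC.2.1
  have hd' := Set.disjoint_left.1 hdisj
  rw [hpart] at hint
  have hxS : x ∈ S := hpart ▸ Or.inl hx
  have hyS : y ∈ S := hpart ▸ Or.inr hy
  rcases q with _ | ⟨h, p⟩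
  · exact absurd hy (hd' hx)
  · rename_i c
    rw [Walk.cons_isPath_iff] at hq
    have hzx : z ≠ x := by rintro rfl; exact hdis hzC hxS
    have hzy : z ≠ y := by rintro rfl; exact hdis hzC hyS
    have hzp : z ∈ p.support := by
      rw [Walk.support_cons, List.mem_cons] at hz; exact hz.resolve_left hzx
    have hall : ∀ v ∈ p.support, v ≠ y → v ∈ C := by
      rcases seg_dich hC p hq.1 (fun v hv hvy => hint v (by simp [hv])
        (by rintro rfl; exact hq.2 hv) hvy) with hh | hh
      · exact hh
      · exact absurd hzC (hh z hzp hzy)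
    refine ⟨x, c, y, h, p, ⟨hxS, hyS, hq.1, ?_, hall, ?_, hqP ▸ hP⟩, hqP, hx, fun hh => hd' hh hy⟩
    · exact fun hh => hq.2 (Walk.fst_mem_support_of_mem_edges _ hh)
    · rintro rfl
      obtain rfl : p = Walk.nil := by simpa using hq.1
      simp at hzp; exact hzy hzp

theorem seg_m01 {G : SimpleGraph V} {S M₀ M₁ C : Set V} (hpart : M₀ ∪ M₁ = S)
    (hC : IsCompOf G C S) {O : G.Subgraph} {a c b : V} {h : G.Adj a c} {p : G.Walk c b}
    (hs : SegW G S C O h p) (ha : a ∈ M₀) (hb : b ∉ M₀) :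
    IsM01Path G M₀ M₁ C (Walk.cons h p).toSubgraph := by
  obtain ⟨h1, h2, h3, h4, h5, h6, h7⟩ := hs
  have hdis := Set.disjoint_left.1 hC.2.1
  have hb1 : b ∈ M₁ := by rw [← hpart] at h2; exact h2.resolve_left hb
  refine ⟨a, b, Walk.cons h p, ?_, rfl, ha, hb1, ?_, c, by simp, h5 c (by simp) h6⟩
  · rw [Walk.cons_isPath_iff]
    refine ⟨h3, fun hh => hdis (h5 a hh ?_) h1⟩
    rintro rfl; exact hb ha
  · intro z hz hza hzb
    rw [Walk.support_cons, List.mem_cons] at hz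
    rw [hpart]
    exact hdis (h5 z (hz.resolve_left hza) hzb)

theorem seg_exists {G : SimpleGraph V} {S C : Set V} (hC : IsCompOf G C S) {w : V}
    (O : G.Walk w w) (hO : O.IsCycle) {m k : V} (hm : m ∈ S) (hk : k ∈ C)
    (hmk : O.toSubgraph.Adj m k) :
    ∃ (b : V) (h : G.Adj m k) (p : G.Walk k b), SegW G S C O.toSubgraph h p := by
  classical
  have hmO : m ∈ O.support := by
    rw [← Walk.mem_verts_toSubgraph]; exact hmk.fst_mem
  obtain ⟨O', hO', hsub, hsnd⟩ : ∃ O' : G.Walk m m, O'.IsCycle ∧ O'.toSubgraph = O.toSubgraph ∧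
      O'.snd = k := by
    have hr : (O.rotate m hmO).IsCycle := hO.rotate hmO
    have hrs : (O.rotate m hmO).toSubgraph = O.toSubgraph := Walk.toSubgraph_rotate _ _
    have : k ∈ (O.rotate m hmO).toSubgraph.neighborSet m := by
      rw [hrs]; exact hmk
    rw [hr.neighborSet_toSubgraph_endpoint] at this
    rcases this with h | h
    · exact ⟨_, hr, hrs, h.symm⟩
    · refine ⟨_, hr.reverse, by rw [Walk.toSubgraph_reverse, hrs], ?_⟩
      rw [Walk.snd_reverse]; exact h.symm
  rcases O' with _ | ⟨h, p⟩
  · exact absurd rfl hO'.ne_nil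
  · rw [Walk.snd_cons] at hsnd
    subst hsnd
    rw [Walk.cons_isCycle_iff] at hO'
    obtain ⟨b, q, h1, h2, h3, h4, h5, h6⟩ := seg_trunc hC p hO'.1 hk hm
    refine ⟨b, h, q, hm, h1, h2, fun hh => hO'.2 (h5 hh), h3, ?_, ?_⟩
    · rintro rfl; exact Set.disjoint_left.1 hC.2.1 hk h1
    · rw [← hsub]; exact sup_le_sup_left h6 _

theorem cycle_deg {G : SimpleGraph V} {w : V} (O : G.Walk w w) (hO : O.IsCycle) :
    ∀ v x y z, O.toSubgraph.Adj v x → O.toSubgraph.Adj v y → O.toSubgraph.Adj v z →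
      y ≠ x → z ≠ x → y = z := by
  intro v x y z hx hy hz hyx hzx
  have hv : v ∈ O.support := by
    rw [← Walk.mem_verts_toSubgraph]; exact hx.fst_mem
  have := hO.ncard_neighborSet_toSubgraph_eq_two hv
  rw [Set.ncard_eq_two] at this
  obtain ⟨s, t, hst, he⟩ := this
  have e : ∀ u, O.toSubgraph.Adj v u → u = s ∨ u = t := by
    intro u hu
    have : u ∈ O.toSubgraph.neighborSet v := hu
    rw [he] at this; exact this
  have := e x hx
  have := e y hy
  have := e z hz
  grind

theorem seg_start {G : SimpleGraph V} {S C : Set V} (hC : IsCompOf G C S) {O P : G.Subgraph}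
    (hP : SegP G S C O P) {m k : V} (hm : m ∈ S) (hmk : P.Adj m k) :
    ∃ (b : V) (h : G.Adj m k) (p : G.Walk k b), SegW G S C O h p ∧
      (Walk.cons h p).toSubgraph = P := by
  have hdis := Set.disjoint_left.1 hC.2.1
  obtain ⟨a, c, b, h, p, hs, rfl⟩ := hP
  have he : s(m, k) ∈ (Walk.cons h p).edges := by
    rw [← Walk.mem_edges_toSubgraph]; exact hmk
  rw [Walk.edges_cons, List.mem_cons] at he
  rcases he with he | he
  · rw [Sym2.eq_iff] at he
    rcases he with ⟨rfl, rfl⟩ | ⟨rfl, rfl⟩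
    · exact ⟨b, h, p, hs, rfl⟩
    · exact absurd hm (hdis (hs.2.2.2.2.1 _ p.start_mem_support hs.2.2.2.2.2.1))
  · have hmb : m = b := by
      by_contra hmb
      exact hdis (hs.2.2.2.2.1 m (Walk.fst_mem_support_of_mem_edges _ he) hmb) hm
    subst hmb
    obtain ⟨d, h', p', hs', hsub, hk⟩ := hs.reverse hC
    obtain rfl := hk k he
    exact ⟨a, h', p', hs', hsub⟩

open Classical in
theorem wcount_parity [Fintype V] {G : SimpleGraph V} {S M₀ M₁ C : Set V}
    (hpart : M₀ ∪ M₁ = S) (hdisj : Disjoint M₀ M₁) (hC : IsCompOf G C S) {w : V}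
    (O : G.Walk w w) (hO : O.IsCycle) :
    Wcount G M₀ M₁ C O.toSubgraph ≡
      (Finset.univ.filter (fun e => e ∈ O.toSubgraph.edgeSet ∧ e ∈ FE M₀ C)).card [MOD 2] := by
  have hdis := Set.disjoint_left.1 hC.2.1
  have hM : M₀ ⊆ S := hpart ▸ Set.subset_union_left
  letI : Fintype G.Subgraph := Fintype.ofFinite _
  set F := Finset.univ.filter (fun e => e ∈ O.toSubgraph.edgeSet ∧ e ∈ FE M₀ C) with hF
  let X : Finset G.Subgraph := Finset.univ.filter (fun P => SegP G S C O.toSubgraph P)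
  have hW : Wcount G M₀ M₁ C O.toSubgraph = (X.filter (fun P => IsM01Path G M₀ M₁ C P)).card := by
    rw [Wcount, ← Set.ncard_coe_finset]
    congr 1
    ext P
    simp only [X, Set.mem_setOf_eq, Finset.coe_filter, Finset.mem_filter, Finset.mem_univ, true_and]
    constructor
    · rintro ⟨h1, h2⟩
      obtain ⟨a, c, b, h, p, hs, hP, -⟩ := m01_seg hpart hdisj hC h1 h2
      exact ⟨⟨a, c, b, h, p, hs, hP⟩, h2⟩
    · rintro ⟨⟨a, c, b, h, p, hs, rfl⟩, h2⟩
      exact ⟨hs.2.2.2.2.2.2, h2⟩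
  have hdc := Finset.sum_card_bipartiteAbove_eq_sum_card_bipartiteBelow
    (s := F) (t := X) (fun e P => e ∈ P.edgeSet)
  have hone : ∀ e ∈ F, (X.bipartiteAbove (fun e P => e ∈ P.edgeSet) e).card = 1 := by
    intro e he
    rw [hF, Finset.mem_filter] at he
    obtain ⟨-, heO, m, hm, k, hk, rfl⟩ := he
    obtain ⟨b, h, p, hs⟩ := seg_exists hC O hO (hM hm) hk heO
    rw [Finset.card_eq_one]
    refine ⟨(Walk.cons h p).toSubgraph, ?_⟩
    ext P
    simp only [X, Finset.bipartiteAbove, Finset.mem_filter, Finset.mem_univ, true_and,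
      Finset.mem_singleton]
    constructor
    · rintro ⟨hP, heP⟩
      obtain ⟨b', h', p', hs', rfl⟩ := seg_start hC hP (hM hm) heP
      obtain ⟨h1, h2, h3, h4, h5, h6, h7⟩ := hs
      obtain ⟨h1', h2', h3', h4', h5', h6', h7'⟩ := hs'
      have := seg_unique (S := S) (cycle_deg O hO) p m b' p' heO h3 h3' h4 h4'
        (fun v hv hvb => hdis (h5 v hv hvb)) (fun v hv hvb => hdis (h5' v hv hvb)) h2 h2'
        (le_trans le_sup_right h7) (le_trans le_sup_right h7')
      simp only [Walk.toSubgraph, this]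
    · rintro rfl
      refine ⟨⟨m, k, b, h, p, hs, rfl⟩, ?_⟩
      rw [Walk.mem_edges_toSubgraph]; simp
  have hmod : ∀ P ∈ X, (F.bipartiteBelow (fun e P => e ∈ P.edgeSet) P).card ≡
      (if IsM01Path G M₀ M₁ C P then 1 else 0) [MOD 2] := by
    intro P hP
    have hP : SegP G S C O.toSubgraph P := (Finset.mem_filter.1 hP).2
    have hPO : P ≤ O.toSubgraph := by
      obtain ⟨a, c, b, h, p, hs, rfl⟩ := hP
      exact hs.2.2.2.2.2.2
    have hset : F.bipartiteBelow (fun e P => e ∈ P.edgeSet) P =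
        Finset.univ.filter (fun e => e ∈ P.edgeSet ∧ e ∈ FE M₀ C) := by
      ext e
      simp only [hF, Finset.bipartiteBelow, Finset.mem_filter, Finset.mem_univ, true_and]
      have : e ∈ P.edgeSet → e ∈ O.toSubgraph.edgeSet := fun h => Subgraph.edgeSet_mono hPO h
      tauto
    rw [hset]
    by_cases hm : IsM01Path G M₀ M₁ C P
    · obtain ⟨a, c, b, h, p, hs, rfl, ha, hb⟩ := m01_seg hpart hdisj hC hPO hm
      rw [count_seg hC hM hs]
      rw [if_pos hm, if_pos ha, if_neg hb]
    · obtain ⟨a, c, b, h, p, hs, rfl⟩ := hP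
      rw [count_seg hC hM hs, if_neg hm]
      by_cases ha : a ∈ M₀ <;> by_cases hb : b ∈ M₀
      · rw [if_pos ha, if_pos hb]; rfl
      · exact absurd (seg_m01 hpart hC hs ha hb) hm
      · obtain ⟨d, h', p', hs', hsub, -⟩ := hs.reverse hC
        rw [← hsub] at hm
        exact absurd (seg_m01 hpart hC hs' hb ha) hm
      · rw [if_neg ha, if_neg hb]
  rw [Finset.sum_congr rfl hone, Finset.sum_const, smul_eq_mul, mul_one] at hdc
  rw [hW, hdc, Finset.card_filter]
  exact Nat.ModEq.symm (Nat.ModEq.sum hmod)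

/-- Let `S` be a set of vertices of `G`, `C` a component of `G - S`, and
`{M₀, M₁}` a bipartition of `S`. For a cycle `O` let `W(O)` be the number of `M₀`–`M₁`
paths contained in `O` meeting `C`. If `Q` is an `O₁`-path for a cycle `O₁`, and `O₂`,
`O₃` are the two cycles of `O₁ ∪ Q` containing `Q`, then `W(O₁) + W(O₂) + W(O₃)` is
even. -/
theorem parity_of_M01_path_counts
    {V : Type*} [Fintype V] (G : SimpleGraph V) (S M₀ M₁ C : Set V)
    (hpart : M₀ ∪ M₁ = S) (hdisj : Disjoint M₀ M₁) (hC : IsCompOf G C S)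
    {w₁ : V} (O₁ : G.Walk w₁ w₁) (hO₁ : O₁.IsCycle)
    {x y : V} (hxy : x ≠ y) (Q : G.Walk x y) (hQ : Q.IsPath)
    (hQx : x ∈ O₁.support) (hQy : y ∈ O₁.support)
    (hQint : ∀ z ∈ Q.support, z ∈ O₁.support → z = x ∨ z = y)
    (hQedge : ∀ e ∈ Q.edges, e ∉ O₁.edges)
    {w₂ w₃ : V} (O₂ : G.Walk w₂ w₂) (O₃ : G.Walk w₃ w₃)
    (hO₂ : O₂.IsCycle) (hO₃ : O₃.IsCycle)
    (hQ₂ : Q.toSubgraph ≤ O₂.toSubgraph) (hQ₃ : Q.toSubgraph ≤ O₃.toSubgraph)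
    (hsup : O₂.toSubgraph ⊔ O₃.toSubgraph = O₁.toSubgraph ⊔ Q.toSubgraph)
    (hinf : O₂.toSubgraph ⊓ O₃.toSubgraph = Q.toSubgraph) :
    Even (Wcount G M₀ M₁ C O₁.toSubgraph + Wcount G M₀ M₁ C O₂.toSubgraph +
      Wcount G M₀ M₁ C O₃.toSubgraph) := by
  classical
  have k1 := wcount_parity hpart hdisj hC O₁ hO₁
  have k2 := wcount_parity hpart hdisj hC O₂ hO₂
  have k3 := wcount_parity hpart hdisj hC O₃ hO₃
  have hs : ∀ e, (e ∈ O₂.toSubgraph.edgeSet ∨ e ∈ O₃.toSubgraph.edgeSet) ↔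
      (e ∈ O₁.toSubgraph.edgeSet ∨ e ∈ Q.toSubgraph.edgeSet) := by
    intro e
    have := congrArg (fun H : G.Subgraph => e ∈ H.edgeSet) hsup
    simpa [Subgraph.edgeSet_sup] using this
  have hi : ∀ e, (e ∈ O₂.toSubgraph.edgeSet ∧ e ∈ O₃.toSubgraph.edgeSet) ↔
      e ∈ Q.toSubgraph.edgeSet := by
    intro e
    have := congrArg (fun H : G.Subgraph => e ∈ H.edgeSet) hinf
    simpa [Subgraph.edgeSet_inf] using this
  have hd : ∀ e, e ∈ Q.toSubgraph.edgeSet → e ∉ O₁.toSubgraph.edgeSet := by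
    intro e
    rw [Walk.mem_edges_toSubgraph, Walk.mem_edges_toSubgraph]
    exact hQedge e
  set F₁ := Finset.univ.filter (fun e => e ∈ O₁.toSubgraph.edgeSet ∧ e ∈ FE M₀ C) with h1
  set F₂ := Finset.univ.filter (fun e => e ∈ O₂.toSubgraph.edgeSet ∧ e ∈ FE M₀ C) with h2
  set F₃ := Finset.univ.filter (fun e => e ∈ O₃.toSubgraph.edgeSet ∧ e ∈ FE M₀ C) with h3
  set FQ := Finset.univ.filter (fun e => e ∈ Q.toSubgraph.edgeSet ∧ e ∈ FE M₀ C) with hq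
  have a1 : F₂ ∪ F₃ = F₁ ∪ FQ := by
    ext e
    have := hs e
    simp only [h1, h2, h3, hq, Finset.mem_union, Finset.mem_filter, Finset.mem_univ, true_and]
    tauto
  have a2 : F₂ ∩ F₃ = FQ := by
    ext e
    have := hi e
    simp only [h2, h3, hq, Finset.mem_inter, Finset.mem_filter, Finset.mem_univ, true_and]
    tauto
  have a3 : Disjoint F₁ FQ := by
    rw [Finset.disjoint_left]
    intro e he he'
    simp only [h1, hq, Finset.mem_filter, Finset.mem_univ, true_and] at he he'
    exact hd e he'.1 he.1
  have b1 := Finset.card_union_add_card_inter F₂ F₃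
  rw [a1, a2, Finset.card_union_of_disjoint a3] at b1
  unfold Nat.ModEq at k1 k2 k3
  rw [Nat.even_iff]
  omega

end RadialPaper
end

section
/- Let U be a set of vertices of a connected graph G, let p₀ ∈ V(G) \ U be a vertex of maximal distance from U in G, and let P = p₀…p_n be a shortest p₀–U path in G. Given r ∈ ℕ, write B_i := B_G(p_i, r) for 0 ≤ i ≤ n. Suppose that a connected component C of G − ⋃_{i=0}^{n} B_i is disjoint from U and satisfies N_G(C) ⊆ ⋃_{i=0}^{ℓ} B_i for some ℓ ≤ n. Then dist_G(v, P) ≤ 2r + ℓ for every vertex v ∈ C. -/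
open SimpleGraph

namespace RadialPaper

variable {V W N : Type*}

theorem aux_walk_exit {V : Type*} (G : SimpleGraph V) (C : Set V) {v u : V} (w : G.Walk v u)
    (hv : v ∈ C) (hu : u ∉ C) :
    ∃ x ∈ C, ∃ y, G.Adj x y ∧ y ∉ C ∧ ∃ (w₁ : G.Walk v y) (w₂ : G.Walk y u),
      w₁.length + w₂.length = w.length := by
  induction w with
  | nil => exact absurd hv hu
  | @cons a b c h q ih =>
    by_cases hb : b ∈ C
    · obtain ⟨x, hx, y, hxy, hy, w₁, w₂, hw⟩ := ih hb hu
      refine ⟨x, hx, y, hxy, hy, SimpleGraph.Walk.cons h w₁, w₂, ?_⟩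
      simp only [SimpleGraph.Walk.length_cons]
      omega
    · refine ⟨a, hv, b, h, hb, SimpleGraph.Walk.cons h SimpleGraph.Walk.nil, q, ?_⟩
      simp only [SimpleGraph.Walk.length_cons, SimpleGraph.Walk.length_nil]
      omega

/-- Let `U` be a set of vertices of a connected graph `G`, let
`p₀ ∉ U` be of maximal distance from `U`, and let `P = p₀ … p_n` be a shortest `p₀`–`U`
path. If a component `C` of `G` minus the balls `B_i := B_G(p_i, r)` is disjoint from `U`
and `N_G(C) ⊆ ⋃_{i ≤ ℓ} B_i` for some `ℓ ≤ n`, then every vertex of `C` has distance at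
most `2r + ℓ` from `P`. -/
theorem components_attaching_to_end_are_close
    {V : Type*} [Fintype V] (G : SimpleGraph V) (hconn : G.Connected)
    (U : Set V) (n r ℓ : ℕ) (hℓ : ℓ ≤ n)
    (p : Fin (n + 1) → V) (hp0 : p 0 ∉ U)
    (hadj : ∀ i : Fin n, G.Adj (p i.castSucc) (p i.succ))
    (hinj : Function.Injective p)
    (hlast : p (Fin.last n) ∈ U)
    (hshort : (⨅ u ∈ U, G.edist (p 0) u) = (n : ℕ∞))
    (hmax : ∀ w : V, (⨅ u ∈ U, G.edist w u) ≤ (n : ℕ∞))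
    (C : Set V)
    (hC : IsCompOf G C {v : V | ∃ i : Fin (n + 1), G.edist (p i) v ≤ (r : ℕ∞)})
    (hCU : ∀ x ∈ C, x ∉ U)
    (hN : ∀ x ∈ C, ∀ y : V, G.Adj x y → y ∉ C →
      ∃ i : Fin (n + 1), i.val ≤ ℓ ∧ G.edist (p i) y ≤ (r : ℕ∞)) :
    ∀ v ∈ C, ∃ i : Fin (n + 1), G.edist v (p i) ≤ ((2 * r + ℓ : ℕ) : ℕ∞) := by
  have hed : ∀ a b, G.edist a b = (G.dist a b : ℕ∞) := fun a b =>
    ((hconn a b).coe_dist_eq_edist).symm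
  simp only [hed, Nat.cast_le] at *
  intro v hv
  have hpi : ∀ k : ℕ, ∀ hk : k < n + 1, G.dist (p 0) (p ⟨k, hk⟩) ≤ k := by
    intro k
    induction k with
    | zero => intro hk; exact le_of_eq (SimpleGraph.dist_self)
    | succ k ih =>
      intro hk
      have h1 := ih (by omega)
      have h2 : G.Adj (p ⟨k, by omega⟩) (p ⟨k + 1, hk⟩) := hadj ⟨k, by omega⟩
      have h3 := SimpleGraph.dist_eq_one_iff_adj.mpr h2
      have h4 := hconn.dist_triangle (u := p 0) (v := p ⟨k, by omega⟩) (w := p ⟨k + 1, hk⟩)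
      omega
  obtain ⟨u, hu, hvu⟩ : ∃ u ∈ U, G.dist v u ≤ n := by
    by_contra! hcon
    have h1 : ((n + 1 : ℕ) : ℕ∞) ≤ ⨅ u ∈ U, (G.dist v u : ℕ∞) :=
      le_iInf₂ fun u hu => Nat.cast_le.mpr (hcon u hu)
    have h2 := Nat.cast_le.mp (h1.trans (hmax v))
    omega
  have hp0u : n ≤ G.dist (p 0) u := by
    have h1 : (n : ℕ∞) ≤ (G.dist (p 0) u : ℕ∞) := by
      rw [← hshort]
      exact iInf₂_le u hu
    exact Nat.cast_le.mp h1
  obtain ⟨q, hq⟩ := hconn.exists_walk_length_eq_dist v u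
  obtain ⟨x, hx, y, hxy, hy, w₁, w₂, hw⟩ := aux_walk_exit G C q hv (fun h => hCU u h hu)
  obtain ⟨i, hi, hiy⟩ := hN x hx y hxy hy
  refine ⟨i, ?_⟩
  have e1 := SimpleGraph.dist_le w₁
  have e2 := SimpleGraph.dist_le w₂
  have e3 := hpi i.val i.isLt
  have e4 := hconn.dist_triangle (u := p 0) (v := p i) (w := u)
  have e5 := hconn.dist_triangle (u := p i) (v := y) (w := u)
  have e6 := hconn.dist_triangle (u := v) (v := y) (w := p i)
  have e7 : G.dist y (p i) = G.dist (p i) y := SimpleGraph.dist_comm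
  simp only [Fin.eta] at e3
  omega

end RadialPaper
end

section
/- Let P = p₀…p_n be a geodesic path in a graph G. Given vertices u, v of G, let Q be a shortest u–P path in G with endvertex q ∈ P, and let R be a shortest v–(P ∪ Q) path in G with endvertex r ∈ P ∪ Q. Suppose that at least one of the following holds: (i) r ∈ P and dist_G(q, r) ≥ 4·max{dist_G(u, P), dist_G(v, P)}; (ii) r ∈ Q and dist_G(q, r) ≥ 4·max{dist_G(v, Q), dist_G(p₀, q), dist_G(p_n, q)}. Then P ∪ Q ∪ R is a 3-quasi-geodesic subgraph of G. -/
open SimpleGraph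

namespace RadialPaper

variable {V W N : Type*}

/-- Any walk inside a path `P` takes at least as many steps as the index difference. -/
theorem aux_index {V : Type*} {G : SimpleGraph V} {x y : V} (P : G.Walk x y) (hP : P.IsPath)
    {a b : V} (W : G.Walk a b) (hW : W.toSubgraph ≤ P.toSubgraph) :
    ∀ i j : ℕ, i ≤ P.length → j ≤ P.length → P.getVert i = a → P.getVert j = b →
      j ≤ i + W.length := by
  induction W with
  | nil =>
    intro i j hi hj h1 h2
    have : i = j := hP.getVert_injOn hi hj (h1.trans h2.symm)
    simp [this]
  | @cons a c b h W ih =>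
    intro i j hi hj h1 h2
    have hs : G.subgraphOfAdj h ≤ P.toSubgraph := le_trans (by simp [Walk.toSubgraph]) hW
    have hs2 : W.toSubgraph ≤ P.toSubgraph := le_trans (by simp [Walk.toSubgraph]) hW
    have hadj : P.toSubgraph.Adj a c := hs.2 (by simp)
    rw [Walk.toSubgraph_adj_iff] at hadj
    obtain ⟨k, hk, hkl⟩ := hadj
    rw [Sym2.eq_iff] at hk
    rw [Walk.length_cons]
    rcases hk with ⟨hk1, hk2⟩ | ⟨hk1, hk2⟩
    · have e : i = k := hP.getVert_injOn hi (show k ≤ P.length by omega) (h1.trans hk1.symm)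
      have := ih hs2 (k+1) j (by omega) hj hk2 h2
      omega
    · have e : i = k+1 := hP.getVert_injOn hi (show k+1 ≤ P.length by omega) (h1.trans hk2.symm)
      have := ih hs2 k j (by omega) hj hk1 h2
      omega

theorem aux_edist_le {V : Type*} {G : SimpleGraph V} (X : G.Subgraph) {a b : V}
    (ha : a ∈ X.verts) (hb : b ∈ X.verts) (W : G.Walk a b) (hW : W.toSubgraph ≤ X) :
    X.coe.edist ⟨a, ha⟩ ⟨b, hb⟩ ≤ W.length := by
  induction W with
  | nil => simp
  | @cons a c b h W ih =>
    have hs : G.subgraphOfAdj h ≤ X := le_trans (by simp [Walk.toSubgraph]) hW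
    have hs2 : W.toSubgraph ≤ X := le_trans (by simp [Walk.toSubgraph]) hW
    have hc : c ∈ X.verts := hs.1 (by simp)
    have hadj : X.Adj a c := hs.2 (by simp)
    have h1 : X.coe.edist ⟨a, ha⟩ ⟨c, hc⟩ ≤ 1 := by
      have : X.coe.Adj ⟨a, ha⟩ ⟨c, hc⟩ := hadj
      exact (SimpleGraph.edist_eq_one_iff_adj.2 this).le
    refine (SimpleGraph.edist_triangle (v := ⟨c, hc⟩)).trans ?_
    rw [Walk.length_cons, add_comm]
    push_cast
    exact add_le_add (ih hc hb hs2) h1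

/-- Walk in a subgraph coerced to a walk of `G`. -/
theorem aux_lift {V : Type*} {G : SimpleGraph V} (X : G.Subgraph) {a b : X.verts}
    (W : X.coe.Walk a b) : ∃ W' : G.Walk (a : V) (b : V), W'.toSubgraph ≤ X ∧
      W'.length = W.length := by
  induction W with
  | @nil a => exact ⟨Walk.nil, by simp [Walk.toSubgraph, a.2], rfl⟩
  | @cons a c b h W ih =>
    obtain ⟨W', h1, h2⟩ := ih
    have h' : X.Adj a c := h
    refine ⟨Walk.cons h'.adj_sub W', ?_, by simp [h2]⟩
    rw [Walk.toSubgraph]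
    exact sup_le (SimpleGraph.subgraphOfAdj_le_of_adj X h') h1

theorem aux_min {V : Type*} {G : SimpleGraph V} {x y : V}
    (P : G.Walk x y) (hP : P.IsPath) (hPgeo : IsQuasiGeodesic G P.toSubgraph 1)
    (W : G.Walk x y) : P.length ≤ W.length := by
  have hx : x ∈ P.toSubgraph.verts := by simp
  have hy : y ∈ P.toSubgraph.verts := by simp
  have h := hPgeo ⟨x, hx⟩ ⟨y, hy⟩
  have h2 : P.toSubgraph.coe.edist ⟨x, hx⟩ ⟨y, hy⟩ ≤ W.length := by
    refine h.trans ?_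
    simpa using W.edist_le
  have hne : P.toSubgraph.coe.edist ⟨x, hx⟩ ⟨y, hy⟩ ≠ ⊤ :=
    ne_top_of_le_ne_top (by simp) h2
  obtain ⟨S, hS⟩ := SimpleGraph.exists_walk_of_edist_ne_top hne
  obtain ⟨S', h3, h4⟩ := aux_lift _ S
  have := aux_index P hP S' h3 0 P.length (by omega) le_rfl (by simp) (by simp)
  rw [← hS] at h2
  have : S.length ≤ W.length := by exact_mod_cast h2
  omega

theorem aux_take_le {V : Type*} [DecidableEq V] {G : SimpleGraph V} {x y a : V} (P : G.Walk x y)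
    (ha : a ∈ P.support) : (P.takeUntil a ha).toSubgraph ≤ P.toSubgraph := by
  conv_rhs => rw [← P.take_spec ha, Walk.toSubgraph_append]
  exact le_sup_left

theorem aux_drop_le {V : Type*} [DecidableEq V] {G : SimpleGraph V} {x y a : V} (P : G.Walk x y)
    (ha : a ∈ P.support) : (P.dropUntil a ha).toSubgraph ≤ P.toSubgraph := by
  conv_rhs => rw [← P.take_spec ha, Walk.toSubgraph_append]
  exact le_sup_right

theorem aux_len {V : Type*} [DecidableEq V] {G : SimpleGraph V} {x y a : V} (P : G.Walk x y)
    (ha : a ∈ P.support) :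
    (P.takeUntil a ha).length + (P.dropUntil a ha).length = P.length := by
  rw [← Walk.length_append, P.take_spec ha]

theorem aux_take_min {V : Type*} [DecidableEq V] {G : SimpleGraph V} {x y a : V} (P : G.Walk x y)
    (ha : a ∈ P.support) (hmin : ∀ W : G.Walk x y, P.length ≤ W.length) (W : G.Walk x a) :
    (P.takeUntil a ha).length ≤ W.length := by
  have := hmin (W.append (P.dropUntil a ha))
  rw [Walk.length_append] at this
  have := aux_len P ha
  omega

theorem aux_drop_min {V : Type*} [DecidableEq V] {G : SimpleGraph V} {x y a z : V} (P : G.Walk x y)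
    (ha : a ∈ P.support) (hmin : ∀ W : G.Walk x z, P.length ≤ W.length) (W : G.Walk a z) :
    (P.dropUntil a ha).length ≤ W.length := by
  have := hmin ((P.takeUntil a ha).append W)
  rw [Walk.length_append] at this
  have := aux_len P ha
  omega

theorem aux_geo {V : Type*} [DecidableEq V] {G : SimpleGraph V} {x y a b : V} (P : G.Walk x y)
    (hmin : ∀ W : G.Walk x y, P.length ≤ W.length)
    (ha : a ∈ P.support) (hb : b ∈ P.support) :
    ∃ S : G.Walk a b, S.toSubgraph ≤ P.toSubgraph ∧ ∀ W : G.Walk a b, S.length ≤ W.length := by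
  have hb' := hb
  rw [← P.take_spec ha, Walk.mem_support_append_iff] at hb'
  rcases hb' with h | h
  · refine ⟨((P.takeUntil a ha).dropUntil b h).reverse, ?_, fun W => ?_⟩
    · rw [Walk.toSubgraph_reverse]
      exact (aux_drop_le _ h).trans (aux_take_le P ha)
    · rw [Walk.length_reverse, ← Walk.length_reverse W]
      exact aux_drop_min _ h (aux_take_min P ha hmin) _
  · refine ⟨(P.dropUntil a ha).takeUntil b h, ?_, fun W => ?_⟩
    · exact (aux_take_le _ h).trans (aux_drop_le P ha)
    · exact aux_take_min _ h (aux_drop_min P ha hmin) _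

theorem aux_max {V : Type*} [DecidableEq V] {G : SimpleGraph V} {x y a b : V} (P : G.Walk x y)
    (hmin : ∀ W : G.Walk x y, P.length ≤ W.length)
    (ha : a ∈ P.support) (hb : b ∈ P.support) :
    ∃ S : G.Walk b a, S.toSubgraph ≤ P.toSubgraph ∧
      (S.length : ℕ∞) ≤ max (G.edist x a) (G.edist y a) := by
  have hb' := hb
  rw [← P.take_spec ha, Walk.mem_support_append_iff] at hb'
  rcases hb' with h | h
  · refine ⟨(P.takeUntil a ha).dropUntil b h, ?_, ?_⟩
    · exact (aux_drop_le _ h).trans (aux_take_le P ha)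
    · refine le_max_of_le_left (le_iInf fun W => ?_)
      have h1 := aux_take_min P ha hmin W
      have h2 := aux_len _ h
      exact_mod_cast (by omega : _ ≤ W.length)
  · refine ⟨((P.dropUntil a ha).takeUntil b h).reverse, ?_, ?_⟩
    · rw [Walk.toSubgraph_reverse]
      exact (aux_take_le _ h).trans (aux_drop_le P ha)
    · refine le_max_of_le_right (le_iInf fun W => ?_)
      have h1 := aux_drop_min P ha hmin W.reverse
      have h2 := aux_len _ h
      rw [Walk.length_reverse] at *
      exact_mod_cast (by omega : _ ≤ W.length)

/-- Every walk from `a` to `b` is at least a third as long as some walk inside `X`. -/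
def Good {V : Type*} {G : SimpleGraph V} (X : G.Subgraph) (a b : V) : Prop :=
  ∀ W : G.Walk a b, ∃ S : G.Walk a b, S.toSubgraph ≤ X ∧ S.length ≤ 3 * W.length

theorem Good.symm {V : Type*} {G : SimpleGraph V} {X : G.Subgraph} {a b : V} (h : Good X a b) :
    Good X b a := by
  intro W
  obtain ⟨S, h1, h2⟩ := h W.reverse
  exact ⟨S.reverse, by rwa [Walk.toSubgraph_reverse], by simpa using h2⟩

theorem good_same {V : Type*} [DecidableEq V] {G : SimpleGraph V} {X : G.Subgraph} {x y a b : V}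
    (P : G.Walk x y) (hX : P.toSubgraph ≤ X)
    (hmin : ∀ W : G.Walk x y, P.length ≤ W.length)
    (ha : a ∈ P.support) (hb : b ∈ P.support) : Good X a b := by
  intro W
  obtain ⟨S, h1, h2⟩ := aux_geo P hmin ha hb
  have := h2 W
  exact ⟨S, h1.trans hX, by omega⟩

/-- `Q` a leg attached at `q ∈ P`. -/
theorem good_leg {V : Type*} [DecidableEq V] {G : SimpleGraph V} {X : G.Subgraph} {x y u q a b : V}
    (P : G.Walk x y) (hX : P.toSubgraph ≤ X)
    (hmin : ∀ W : G.Walk x y, P.length ≤ W.length)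
    (Q : G.Walk u q) (hXQ : Q.toSubgraph ≤ X) (hq : q ∈ P.support)
    (hQ : ∀ z ∈ P.support, ∀ W : G.Walk u z, Q.length ≤ W.length)
    (ha : a ∈ Q.support) (hb : b ∈ P.support) : Good X a b := by
  intro W
  obtain ⟨S, h1, h2⟩ := aux_geo P hmin hq hb
  have h3 := aux_drop_min Q ha (hQ b hb) W
  have h4 := h2 ((Q.dropUntil a ha).reverse.append W)
  rw [Walk.length_append, Walk.length_reverse] at h4
  refine ⟨(Q.dropUntil a ha).append S, ?_, ?_⟩
  · rw [Walk.toSubgraph_append]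
    exact sup_le ((aux_drop_le Q ha).trans hXQ) (h1.trans hX)
  · rw [Walk.length_append]
    omega

theorem good_far {V : Type*} {G : SimpleGraph V} {X : G.Subgraph} {q r a b : V}
    (T : G.Walk a r) (hT : T.toSubgraph ≤ X) (S : G.Walk r q) (hS : S.toSubgraph ≤ X)
    (U : G.Walk b q) (hU : U.toSubgraph ≤ X) (hmin : ∀ W : G.Walk r q, S.length ≤ W.length)
    (h1 : 4 * (T.length : ℕ∞) ≤ G.edist q r) (h2 : 4 * (U.length : ℕ∞) ≤ G.edist q r) :
    Good X a b := by
  intro W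
  have h3 : G.edist q r ≤ S.length := by simpa using S.reverse.edist_le
  have h4 : 4 * T.length ≤ S.length := by exact_mod_cast h1.trans h3
  have h5 : 4 * U.length ≤ S.length := by exact_mod_cast h2.trans h3
  have h6 := hmin (T.reverse.append (W.append U))
  simp only [Walk.length_append, Walk.length_reverse] at h6
  refine ⟨T.append (S.append U.reverse), ?_, ?_⟩
  · simp only [Walk.toSubgraph_append, Walk.toSubgraph_reverse]
    exact sup_le hT (sup_le hS hU)
  · simp only [Walk.length_append, Walk.length_reverse]
    omega

theorem le_inf_edist {V : Type*} {G : SimpleGraph V} {v : V} (n : ℕ) (L : List V)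
    (h : ∀ z ∈ L, ∀ W : G.Walk v z, n ≤ W.length) : (n : ℕ∞) ≤ ⨅ z ∈ L, G.edist v z :=
  le_iInf fun z => le_iInf fun hz => le_iInf fun W => by exact_mod_cast h z hz W

/-- Let `P` be a geodesic path in `G` from `x` to `y`, let `Q` be a
shortest `u`–`P` path with endvertex `qv ∈ P`, and let `R` be a shortest `v`–`(P ∪ Q)`
path with endvertex `rv ∈ P ∪ Q`. If (i) `rv ∈ P` and
`dist_G(qv, rv) ≥ 4·max{dist_G(u, P), dist_G(v, P)}`, or (ii) `rv ∈ Q` and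
`dist_G(qv, rv) ≥ 4·max{dist_G(v, Q), dist_G(x, qv), dist_G(y, qv)}`, then `P ∪ Q ∪ R`
is a `3`-quasi-geodesic subgraph of `G`. -/
theorem tripod_is_three_quasi_geodesic
    {V : Type*} [Fintype V] (G : SimpleGraph V) {x y : V}
    (P : G.Walk x y) (hP : P.IsPath) (hPgeo : IsQuasiGeodesic G P.toSubgraph 1)
    (u v : V) {qv : V} (hqv : qv ∈ P.support)
    (Q : G.Walk u qv) (hQ : Q.IsPath)
    (hQshort : ∀ z ∈ P.support, ∀ W : G.Walk u z, Q.length ≤ W.length)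
    {rv : V} (hrv : rv ∈ P.support ∨ rv ∈ Q.support)
    (R : G.Walk v rv) (hR : R.IsPath)
    (hRshort : ∀ z : V, (z ∈ P.support ∨ z ∈ Q.support) →
      ∀ W : G.Walk v z, R.length ≤ W.length)
    (hcase :
      (rv ∈ P.support ∧
        4 * max (⨅ z ∈ P.support, G.edist u z) (⨅ z ∈ P.support, G.edist v z) ≤
          G.edist qv rv) ∨
      (rv ∈ Q.support ∧
        4 * max (⨅ z ∈ Q.support, G.edist v z)
            (max (G.edist x qv) (G.edist y qv)) ≤
          G.edist qv rv)) :
    IsQuasiGeodesic G (P.toSubgraph ⊔ Q.toSubgraph ⊔ R.toSubgraph) 3 := by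
  classical
  set X := P.toSubgraph ⊔ Q.toSubgraph ⊔ R.toSubgraph with hX
  have hXP : P.toSubgraph ≤ X := le_sup_left.trans le_sup_left
  have hXQ : Q.toSubgraph ≤ X := le_sup_right.trans le_sup_left
  have hXR : R.toSubgraph ≤ X := le_sup_right
  have mP := aux_min P hP hPgeo
  have mQ : ∀ W : G.Walk u qv, Q.length ≤ W.length := hQshort qv hqv
  have mR : ∀ W : G.Walk v rv, R.length ≤ W.length := hRshort rv hrv
  have RP : ∀ a ∈ R.support, ∀ b ∈ P.support, Good X a b := by
    intro a ha b hb
    rcases hcase with ⟨hr, hc⟩ | ⟨hr, hc⟩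
    · exact good_leg P hXP mP R hXR hr (fun z hz => hRshort z (Or.inl hz)) ha hb
    · obtain ⟨S, hS, hSm⟩ := aux_geo Q mQ hr Q.end_mem_support
      obtain ⟨U, hU, hUm⟩ := aux_max P mP hqv hb
      refine good_far (R.dropUntil a ha) ((aux_drop_le R ha).trans hXR) S (hS.trans hXQ)
        U (hU.trans hXP) hSm (le_trans ?_ hc) (le_trans ?_ hc)
      · refine mul_le_mul_right (le_max_of_le_left ?_) _
        refine le_trans ?_ (le_inf_edist R.length _ (fun z hz => hRshort z (Or.inr hz)))
        have := aux_len R ha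
        exact_mod_cast (by omega : _ ≤ R.length)
      · exact mul_le_mul_right (le_max_of_le_right hUm) _
  have RQ : ∀ a ∈ R.support, ∀ b ∈ Q.support, Good X a b := by
    intro a ha b hb
    rcases hcase with ⟨hr, hc⟩ | ⟨hr, hc⟩
    · obtain ⟨S, hS, hSm⟩ := aux_geo P mP hr hqv
      refine good_far (R.dropUntil a ha) ((aux_drop_le R ha).trans hXR) S (hS.trans hXP)
        (Q.dropUntil b hb) ((aux_drop_le Q hb).trans hXQ) hSm (le_trans ?_ hc) (le_trans ?_ hc)
      · refine mul_le_mul_right (le_max_of_le_right ?_) _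
        refine le_trans ?_ (le_inf_edist R.length _ (fun z hz => hRshort z (Or.inl hz)))
        have := aux_len R ha
        exact_mod_cast (by omega : _ ≤ R.length)
      · refine mul_le_mul_right (le_max_of_le_left ?_) _
        refine le_trans ?_ (le_inf_edist Q.length _ hQshort)
        have := aux_len Q hb
        exact_mod_cast (by omega : _ ≤ Q.length)
    · exact good_leg Q hXQ mQ R hXR hr (fun z hz => hRshort z (Or.inr hz)) ha hb
  have QP : ∀ a ∈ Q.support, ∀ b ∈ P.support, Good X a b := fun a ha b hb =>
    good_leg P hXP mP Q hXQ hqv hQshort ha hb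
  have key : ∀ a ∈ X.verts, ∀ b ∈ X.verts, Good X a b := by
    intro a ha b hb
    simp only [hX, Subgraph.verts_sup, Set.mem_union, Walk.mem_verts_toSubgraph] at ha hb
    rcases ha with (ha | ha) | ha <;> rcases hb with (hb | hb) | hb
    · exact good_same P hXP mP ha hb
    · exact (QP b hb a ha).symm
    · exact (RP b hb a ha).symm
    · exact QP a ha b hb
    · exact good_same Q hXQ mQ ha hb
    · exact (RQ b hb a ha).symm
    · exact RP a ha b hb
    · exact RQ a ha b hb
    · exact good_same R hXR mR ha hb
  rintro ⟨a, ha⟩ ⟨b, hb⟩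
  by_cases htop : G.edist a b = ⊤
  · simp [htop]
  · obtain ⟨W, hW⟩ := SimpleGraph.exists_walk_of_edist_ne_top htop
    obtain ⟨S, hS, hSl⟩ := key a ha b hb W
    refine (aux_edist_le X ha hb S hS).trans ?_
    simp only [← hW]
    exact_mod_cast hSl

end RadialPaper
end
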